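/- arXiv:1901.04241 — 2 statements merged into one kernel-verified Lean document; each statement's English description precedes it below -/
import Mathlib

section
/- Let k ≥ 2, let n = 2^k − 1, and let r be any integer with 0 < r < n. Then there exists a linear code C ⊆ GF(2^k)^n with dim C = r, minimum distance n − r + 1, and C ∩ C^⊥ = {0}; that is, an LCD MDS (n, r, n−r+1) code of length 2^k − 1 exists over the finite field GF(2^k) of characteristic 2. -/
/-- Hamming weight of a vector: the number of nonzero coordinates. -/
noncomputable def hWeight {F : Type*} [Field F] {n : ℕ} (v : Fin n → F) : ℕ :=
  open scoped Classical in
  (Finset.univ.filter fun m => v m ≠ 0).card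

/-- The dual code of `C` with respect to the standard bilinear form. -/
def dualCode {F : Type*} [Field F] {n : ℕ} (C : Submodule F (Fin n → F)) :
    Submodule F (Fin n → F) where
  carrier := {v | ∀ u ∈ C, ∑ m, u m * v m = 0}
  add_mem' := by
    intro a b ha hb u hu
    have h : ∑ m, u m * (a + b) m = (∑ m, u m * a m) + ∑ m, u m * b m := by
      rw [← Finset.sum_add_distrib]
      exact Finset.sum_congr rfl fun m _ => by simp [mul_add]
    rw [h, ha u hu, hb u hu, add_zero]
  zero_mem' := by intro u hu; simp
  smul_mem' := by
    intro c a ha u hu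
    have h : ∑ m, u m * (c • a) m = c * ∑ m, u m * a m := by
      rw [Finset.mul_sum]
      exact Finset.sum_congr rfl fun m _ => by simp [smul_eq_mul]; ring
    rw [h, ha u hu, mul_zero]

/-- Minimum distance of a code: the least Hamming weight of a nonzero codeword. -/
noncomputable def minDist {F : Type*} [Field F] {n : ℕ} (C : Submodule F (Fin n → F)) : ℕ :=
  sInf {d | ∃ v ∈ C, v ≠ 0 ∧ hWeight v = d}

/-!
Let `ζ` be a primitive `n`-th root of unity in a field. The evaluation code
`{(ζ ^ (a * m) * p(ζ ^ m))_m : deg p < r}` is a generalized Reed–Solomon code, hence MDS. The inner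
product of the codewords of `X ^ i` and `X ^ j` is the power sum `∑ m, ζ ^ (m * (2 * a + i + j))`,
which is `n ≠ 0` when `n ∣ 2 * a + i + j` and `0` otherwise. If `a` is chosen such that
`n ∣ 2 * a + (r - 1)`, then for `i, j < r ≤ n` the former happens exactly when `i + j = r - 1`.
Hence the codeword of `p ≠ 0` has inner product `n * p.leadingCoeff ≠ 0` with the codeword of
`X ^ (r - 1 - p.natDegree)`, and the code is LCD. Such an `a` exists whenever `n` or `r` is odd.
-/

open Finset Module Polynomial

section LinearCode

variable {F : Type*} [Field F] {n : ℕ}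

lemma hWeight_add_card_filter_eq_zero [DecidableEq F] (v : Fin n → F) :
    hWeight v + #{m | v m = 0} = n := by
  rw [hWeight, add_comm]
  convert card_filter_add_card_filter_not (s := univ) (fun m => v m = 0)
  exact (Fintype.card_fin n).symm

lemma le_minDist {C : Submodule F (Fin n → F)} {d : ℕ} (hC : C ≠ ⊥)
    (hd : ∀ v ∈ C, v ≠ 0 → d ≤ hWeight v) : d ≤ minDist C := by
  obtain ⟨v, hvC, hv⟩ := Submodule.exists_mem_ne_zero_of_ne_bot hC
  refine le_csInf ⟨_, v, hvC, hv, rfl⟩ ?_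
  rintro _ ⟨w, hwC, hw, rfl⟩
  exact hd w hwC hw

lemma exists_mem_ne_zero_forall_mem_eq_zero {C : Submodule F (Fin n → F)} {s : Finset (Fin n)}
    (hs : #s < finrank F C) : ∃ v ∈ C, v ≠ 0 ∧ ∀ m ∈ s, v m = 0 := by
  let restriction : C →ₗ[F] (s → F) := LinearMap.funLeft F F ((↑) : s → Fin n) ∘ₗ C.subtype
  have hker : LinearMap.ker restriction ≠ ⊥ :=
    LinearMap.ker_ne_bot_of_finrank_lt (by simpa using hs)
  obtain ⟨v, hv, hv0⟩ := Submodule.exists_mem_ne_zero_of_ne_bot hker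
  exact ⟨v, v.2, by simpa using hv0, fun m hm => congrFun hv ⟨m, hm⟩⟩

theorem minDist_add_finrank_le {C : Submodule F (Fin n → F)} (hC : C ≠ ⊥) :
    minDist C + finrank F C ≤ n + 1 := by
  classical
  have hpos : 0 < finrank F C := Submodule.one_le_finrank_iff.2 hC
  have hle : finrank F C ≤ n := by simpa using Submodule.finrank_le C
  obtain ⟨s, -, hs⟩ : ∃ s ⊆ (univ : Finset (Fin n)), #s = finrank F C - 1 :=
    exists_subset_card_eq (by simpa using (Nat.sub_le _ 1).trans hle)
  obtain ⟨v, hvC, hv, hvs⟩ := exists_mem_ne_zero_forall_mem_eq_zero (C := C) (s := s) (by lia)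
  have hzeros : #s ≤ #{m | v m = 0} := card_le_card fun m hm => by simpa using hvs m hm
  have hdist : minDist C ≤ hWeight v := Nat.sInf_le ⟨v, hvC, hv, rfl⟩
  have hweight := hWeight_add_card_filter_eq_zero v
  lia

end LinearCode

section GeneralizedReedSolomon

variable {F : Type*} [Field F] {n r : ℕ} {x v : Fin n → F} {p : F[X]}

/-- The encoder of a generalized Reed–Solomon code: evaluation of a polynomial at the points `x m`,
scaled by the column multipliers `v m`. It is defined on all polynomials, so that one map
serves every dimension. -/
noncomputable def grsEncode (x v : Fin n → F) : F[X] →ₗ[F] (Fin n → F) :=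
  LinearMap.pi fun m => v m • leval (x m)

@[simp]
lemma grsEncode_apply (x v : Fin n → F) (p : F[X]) (m : Fin n) :
    grsEncode x v p m = v m * p.eval (x m) := rfl

/-- The generalized Reed–Solomon code with evaluation points `x` and column multipliers `v`: the
encodings of the polynomials of degree less than `r`. -/
noncomputable def grsCode (x v : Fin n → F) (r : ℕ) : Submodule F (Fin n → F) :=
  (degreeLT F r).map (grsEncode x v)

lemma lt_hWeight_grsEncode_add (hx : Function.Injective x) (hv : ∀ m, v m ≠ 0)
    (hp : p ≠ 0) (hpr : p.degree < r) : n < hWeight (grsEncode x v p) + r := by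
  classical
  by_contra! hle
  have hweight := hWeight_add_card_filter_eq_zero (grsEncode x v p)
  have hzeros : r ≤ #{m | grsEncode x v p m = 0} := by lia
  refine hp (eq_zero_of_degree_lt_of_eval_index_eq_zero _ hx.injOn
    (hpr.trans_le (Nat.cast_le.2 hzeros)) fun m hm => ?_)
  simpa [hv m] using hm

lemma disjoint_degreeLT_ker_grsEncode (hx : Function.Injective x) (hv : ∀ m, v m ≠ 0)
    (hrn : r ≤ n) : Disjoint (degreeLT F r) (LinearMap.ker (grsEncode x v)) := by
  rw [Submodule.disjoint_def]
  intro p hpr hker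
  by_contra hp
  have hlt := lt_hWeight_grsEncode_add hx hv hp (mem_degreeLT.1 hpr)
  rw [LinearMap.mem_ker.1 hker] at hlt
  simp [hWeight, hrn.not_gt] at hlt

theorem finrank_grsCode (hx : Function.Injective x) (hv : ∀ m, v m ≠ 0) (hrn : r ≤ n) :
    finrank F (grsCode x v r) = r := by
  have hinj : Function.Injective ((grsEncode x v).domRestrict (degreeLT F r)) :=
    LinearMap.injective_domRestrict_iff.2 (disjoint_degreeLT_ker_grsEncode hx hv hrn)
  rw [grsCode, ← LinearMap.range_domRestrict, LinearMap.finrank_range_of_inj hinj,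
    finrank_eq_card_basis (degreeLT.basis F r), Fintype.card_fin]

theorem minDist_grsCode (hx : Function.Injective x) (hv : ∀ m, v m ≠ 0) (hr : 0 < r)
    (hrn : r ≤ n) : minDist (grsCode x v r) = n - r + 1 := by
  have hrank := finrank_grsCode hx hv hrn
  have hne : grsCode x v r ≠ ⊥ := Submodule.one_le_finrank_iff.1 (hrank.symm ▸ hr)
  have hsingleton := minDist_add_finrank_le hne
  refine le_antisymm (by lia) (le_minDist hne ?_)
  rintro _ ⟨p, hp, rfl⟩ hpne
  have hlt := lt_hWeight_grsEncode_add hx hv (ne_zero_of_map hpne) (mem_degreeLT.1 hp)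
  lia

end GeneralizedReedSolomon

section PrimitiveRoot

lemma exists_isPrimitiveRoot_card_sub_one (F : Type*) [Field F] [Finite F] :
    ∃ ζ : F, IsPrimitiveRoot ζ (Nat.card F - 1) := by
  obtain ⟨g, hg⟩ := IsCyclic.exists_ofOrder_eq_natCard (α := Fˣ)
  refine ⟨g, ?_⟩
  rw [← Nat.card_units, ← hg, ← orderOf_units]
  exact IsPrimitiveRoot.orderOf _

lemma sum_primitiveRoot_pow_pow {R : Type*} [CommRing R] [IsDomain R] {n : ℕ} {ζ : R}
    (hζ : IsPrimitiveRoot ζ n) (e : ℕ) :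
    ∑ m : Fin n, (ζ ^ (m : ℕ)) ^ e = if n ∣ e then (n : R) else 0 := by
  simp_rw [pow_right_comm ζ _ e, Fin.sum_univ_eq_sum_range (fun m => (ζ ^ e) ^ m)]
  split_ifs with h
  · simp [(hζ.pow_eq_one_iff_dvd e).2 h]
  · have hne : ζ ^ e - 1 ≠ 0 := sub_ne_zero.2 fun h1 => h (hζ.dvd_of_pow_eq_one e h1)
    refine eq_zero_of_ne_zero_of_mul_right_eq_zero hne ?_
    rw [geom_sum_mul, pow_right_comm, hζ.pow_eq_one, one_pow, sub_self]

-- Fourier inversion: summing over `m` isolates the coefficient of index `-e` modulo `n`.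
lemma sum_primitiveRoot_pow_mul_eval {R : Type*} [CommRing R] [IsDomain R] {n : ℕ} {ζ : R}
    (hζ : IsPrimitiveRoot ζ n) {p : R[X]} (hp : p.natDegree < n) {e i : ℕ} (hi : i < n)
    (he : n ∣ e + i) :
    ∑ m : Fin n, (ζ ^ (m : ℕ)) ^ e * p.eval (ζ ^ (m : ℕ)) = n * p.coeff i := by
  have hdvd : ∀ j < n, (n ∣ e + j ↔ j = i) := fun j hj => by
    refine ⟨fun h => ?_, fun h => h ▸ he⟩
    have hmod : e + j ≡ e + i [MOD n] :=
      (Nat.modEq_zero_iff_dvd.2 h).trans (Nat.modEq_zero_iff_dvd.2 he).symm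
    exact (Nat.ModEq.add_left_cancel' e hmod).eq_of_lt_of_lt hj hi
  calc ∑ m : Fin n, (ζ ^ (m : ℕ)) ^ e * p.eval (ζ ^ (m : ℕ))
      = ∑ m : Fin n, ∑ j ∈ range n, p.coeff j * (ζ ^ (m : ℕ)) ^ (e + j) := by
        refine sum_congr rfl fun m _ => ?_
        rw [eval_eq_sum_range' hp, mul_sum]
        exact sum_congr rfl fun j _ => by ring
    _ = ∑ j ∈ range n, p.coeff j * if n ∣ e + j then (n : R) else 0 := by
        rw [sum_comm]
        simp_rw [← mul_sum, sum_primitiveRoot_pow_pow hζ]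
    _ = ∑ j ∈ range n, p.coeff j * if j = i then (n : R) else 0 :=
        sum_congr rfl fun j hj => by simp only [hdvd j (mem_range.1 hj)]
    _ = n * p.coeff i := by simp [hi, mul_comm]

theorem grsCode_primitiveRoot_inf_dualCode {F : Type*} [Field F] {n r a : ℕ} {ζ : F}
    (hζ : IsPrimitiveRoot ζ n) (hrn : r ≤ n) (ha : n ∣ 2 * a + (r - 1)) :
    let C := grsCode (fun m : Fin n => ζ ^ (m : ℕ)) (fun m => (ζ ^ (m : ℕ)) ^ a) r
    C ⊓ dualCode C = ⊥ := by
  intro C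
  rw [eq_bot_iff]
  rintro _ ⟨⟨p, hp, rfl⟩, hdual⟩
  suffices hp0 : p = 0 by simp [hp0]
  by_contra hp0
  have hpr : p.natDegree < r := (natDegree_lt_iff_degree_lt hp0).2 (mem_degreeLT.1 hp)
  have : NeZero n := ⟨by lia⟩
  have hX : (X ^ (r - 1 - p.natDegree) : F[X]) ∈ degreeLT F r := by
    rw [mem_degreeLT, degree_X_pow, Nat.cast_lt]
    lia
  have hinner : (n : F) * p.leadingCoeff = 0 := by
    rw [← hdual _ ⟨_, hX, rfl⟩, leadingCoeff,
      ← sum_primitiveRoot_pow_mul_eval hζ (e := 2 * a + (r - 1 - p.natDegree)) (by lia) (by lia)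
        (by rwa [add_assoc, Nat.sub_add_cancel (by lia)])]
    refine sum_congr rfl fun m _ => ?_
    simp only [grsEncode_apply, eval_pow, eval_X]
    ring
  exact mul_ne_zero hζ.neZero'.out (leadingCoeff_ne_zero.2 hp0) hinner

lemma exists_dvd_two_mul_add {n s : ℕ} (hn : 0 < n) (h : Odd n ∨ Even s) :
    ∃ a, n ∣ 2 * a + s := by
  rcases h with ⟨c, rfl⟩ | ⟨c, rfl⟩
  · exact ⟨c * s, s, by ring⟩
  · obtain ⟨b, rfl⟩ := Nat.exists_eq_add_of_lt hn
    exact ⟨b * c, 2 * c, by ring⟩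

theorem exists_LCD_MDS_code_char_two_general {F : Type*} [Field F] {n r : ℕ} {ζ : F}
    (hζ : IsPrimitiveRoot ζ n) (hodd : Odd n ∨ Odd r) (hr : 0 < r) (hrn : r ≤ n) :
    ∃ C : Submodule F (Fin n → F),
      finrank F C = r ∧ minDist C = n - r + 1 ∧ C ⊓ dualCode C = ⊥ := by
  obtain ⟨a, ha⟩ : ∃ a, n ∣ 2 * a + (r - 1) :=
    exists_dvd_two_mul_add (by lia) (hodd.imp_right fun h => h.tsub_odd odd_one)
  have hinj : Function.Injective fun m : Fin n => ζ ^ (m : ℕ) :=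
    fun i j hij => Fin.ext (hζ.pow_inj i.2 j.2 hij)
  have hne : ∀ m : Fin n, (ζ ^ (m : ℕ)) ^ a ≠ 0 :=
    fun m => pow_ne_zero _ (pow_ne_zero _ (hζ.ne_zero (by lia)))
  exact ⟨_, finrank_grsCode hinj hne hrn, minDist_grsCode hinj hne hr hrn,
    grsCode_primitiveRoot_inf_dualCode hζ hrn ha⟩

end PrimitiveRoot

/-- For `k ≥ 2`, `n = 2^k − 1` and any `0 < r < n`, there exists an LCD
MDS `(n, r, n−r+1)` code over the finite field `GF(2^k)` of characteristic `2`. -/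
theorem exists_LCD_MDS_code_char_two (k : ℕ) (hk : 2 ≤ k) (n r : ℕ) (hn : n = 2 ^ k - 1)
    (hr0 : 0 < r) (hrn : r < n) :
    ∃ C : Submodule (GaloisField 2 k) (Fin n → GaloisField 2 k),
      Module.finrank (GaloisField 2 k) C = r ∧ minDist C = n - r + 1 ∧
        C ⊓ dualCode C = ⊥ := by
  obtain ⟨ζ, hζ⟩ := exists_isPrimitiveRoot_card_sub_one (GaloisField 2 k)
  rw [GaloisField.card 2 k (by lia), ← hn] at hζ
  have hodd : Odd n :=
    hn ▸ Nat.Even.sub_odd Nat.one_le_two_pow (even_two.pow_of_ne_zero (by lia)) odd_one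
  exact exists_LCD_MDS_code_char_two_general hζ (.inl hodd) hr0 hrn.le
end

section
/- Let r, n be integers with 0 < r < n, n odd. Then for every odd integer i ≥ 1 there exist β ≥ 1 and a linear code C_i ⊆ GF(2^β)^{i·n} with dim C_i = i·r, minimum distance i·(n − r) + 1, and C_i ∩ C_i^⊥ = {0}. In particular each C_i is an LCD MDS code of rate exactly r/n, and the ratio of minimum distance to length equals 1 − r/n + 1/(i·n), which tends to 1 − r/n as i → ∞. -/
/-!
Start from a Vandermonde generator matrix `G`: all its maximal minors are nonzero, so its row space
is MDS, and multiplying its columns by nonzero scalars preserves this. Scale the columns outside a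
fixed maximal minor by `t`. By Massey's criterion the scaled row space is LCD as soon as the Gram
determinant is nonzero; this determinant is a polynomial in `t ^ 2` whose constant term is the
square of the chosen minor, so over a large enough field some `t ≠ 0` works.
-/

open Matrix Polynomial
open scoped Cardinal

section Hamming

variable {F : Type*} [Field F] {N : ℕ}

theorem hWeight_add_card_zeros [DecidableEq F] (v : Fin N → F) :
    hWeight v + Fintype.card {m // v m = 0} = N := by
  rw [hWeight, Fintype.card_subtype, add_comm]
  simpa using Finset.card_filter_add_card_filter_not (s := Finset.univ) (fun m => v m = 0)

theorem minDist_eq_of_forall_le {C : Submodule F (Fin N → F)} {v : Fin N → F} (hv : v ∈ C)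
    (hv0 : v ≠ 0) (hmin : ∀ u ∈ C, u ≠ 0 → hWeight v ≤ hWeight u) : minDist C = hWeight v :=
  IsLeast.csInf_eq ⟨⟨v, hv, hv0, rfl⟩, by rintro _ ⟨u, hu, hu0, rfl⟩; exact hmin u hu hu0⟩

end Hamming

section MaximalMinors

variable {F κ ι : Type*} [Field F] [Fintype κ] [DecidableEq κ]

/-- Every maximal minor of the generator matrix `G` (rows `κ`, coordinates `ι`) is nonzero, which
for `|κ| ≤ |ι|` characterizes the matrices with independent rows whose row space is an MDS code. -/
def IsMDSGenerator (G : Matrix κ ι F) : Prop :=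
  ∀ e : κ ↪ ι, (G.submatrix id e).det ≠ 0

namespace IsMDSGenerator

theorem eq_zero_of_vecMul_eq_zero_on {G : Matrix κ ι F} (hG : IsMDSGenerator G) (e : κ ↪ ι)
    {x : κ → F} (hx : ∀ k, (x ᵥ* G) (e k) = 0) : x = 0 :=
  eq_zero_of_vecMul_eq_zero (hG e) (funext hx)

theorem exists_vecMul_eq_on {G : Matrix κ ι F} (hG : IsMDSGenerator G) (e : κ ↪ ι) (y : κ → F) :
    ∃ x : κ → F, ∀ k, (x ᵥ* G) (e k) = y k := by
  have hunit : IsUnit (G.submatrix id e) := (isUnit_iff_isUnit_det _).2 (hG e).isUnit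
  obtain ⟨x, hx⟩ := vecMul_surjective_iff_isUnit.2 hunit y
  exact ⟨x, congrFun hx⟩

theorem vecMulLinear_injective {G : Matrix κ ι F} (hG : IsMDSGenerator G) (e : κ ↪ ι) :
    Function.Injective G.vecMulLinear :=
  (injective_iff_map_eq_zero _).2 fun _ hx =>
    hG.eq_zero_of_vecMul_eq_zero_on e fun k => congrFun hx (e k)

theorem finrank_range_vecMulLinear {G : Matrix κ ι F} (hG : IsMDSGenerator G) (e : κ ↪ ι) :
    Module.finrank F (LinearMap.range G.vecMulLinear) = Fintype.card κ := by
  rw [LinearMap.finrank_range_of_inj (hG.vecMulLinear_injective e),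
    Module.finrank_fintype_fun_eq_card]

theorem mul_diagonal [Fintype ι] [DecidableEq ι] {G : Matrix κ ι F} (hG : IsMDSGenerator G)
    {v : ι → F} (hv : ∀ m, v m ≠ 0) : IsMDSGenerator (G * diagonal v) := by
  intro e
  have hsub : (G * diagonal v).submatrix id e = G.submatrix id e * diagonal (v ∘ e) := by
    ext j k
    simp [Matrix.mul_diagonal]
  rw [hsub, det_mul, det_diagonal]
  exact mul_ne_zero (hG e) (Finset.prod_ne_zero_iff.2 fun k _ => hv (e k))

theorem rectVandermonde_transpose {a : ι → F} (ha : Function.Injective a) (K : ℕ) :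
    IsMDSGenerator (rectVandermonde a 1 K)ᵀ := by
  intro e
  have hsub : ((rectVandermonde a 1 K)ᵀ).submatrix id e = (vandermonde (a ∘ e))ᵀ := by
    ext j k
    simp [rectVandermonde_apply, vandermonde_apply]
  rw [hsub, det_transpose]
  exact det_vandermonde_ne_zero_iff.2 (ha.comp e.injective)

end IsMDSGenerator

end MaximalMinors

namespace IsMDSGenerator

variable {F κ : Type*} [Field F] [Fintype κ] [DecidableEq κ] {N : ℕ} {G : Matrix κ (Fin N) F}

theorem lt_hWeight_vecMul_add_card (hG : IsMDSGenerator G) {x : κ → F} (hx : x ≠ 0) :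
    N < hWeight (x ᵥ* G) + Fintype.card κ := by
  classical
  by_contra! hle
  have hcard : Fintype.card κ ≤ Fintype.card {m // (x ᵥ* G) m = 0} := by
    have := hWeight_add_card_zeros (x ᵥ* G)
    omega
  obtain ⟨e⟩ := Function.Embedding.nonempty_of_card_le hcard
  exact hx (hG.eq_zero_of_vecMul_eq_zero_on (e.trans (Function.Embedding.subtype _))
    fun k => (e k).2)

theorem exists_hWeight_vecMul_add_card_le [Nonempty κ] (hG : IsMDSGenerator G)
    (e : κ ↪ Fin N) :
    ∃ x : κ → F, x ≠ 0 ∧ hWeight (x ᵥ* G) + Fintype.card κ ≤ N + 1 := by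
  classical
  obtain ⟨k₀⟩ := ‹Nonempty κ›
  obtain ⟨x, hx⟩ := hG.exists_vecMul_eq_on e (Pi.single k₀ 1)
  refine ⟨x, ?_, ?_⟩
  · rintro rfl
    simpa using hx k₀
  · have hzeros : Fintype.card {k // k ≠ k₀} ≤ Fintype.card {m // (x ᵥ* G) m = 0} :=
      Fintype.card_le_of_embedding <|
        e.subtypeMap fun k hk => (hx k).trans (Pi.single_eq_of_ne hk 1)
    rw [Fintype.card_subtype_compl, Fintype.card_subtype_eq] at hzeros
    have := hWeight_add_card_zeros (x ᵥ* G)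
    omega

theorem minDist_range_vecMulLinear [Nonempty κ] (hG : IsMDSGenerator G) (e : κ ↪ Fin N) :
    minDist (LinearMap.range G.vecMulLinear) = N - Fintype.card κ + 1 := by
  obtain ⟨x, hx0, hx⟩ := hG.exists_hWeight_vecMul_add_card_le e
  have hx_lt := hG.lt_hWeight_vecMul_add_card hx0
  have hxG : G.vecMulLinear x ≠ 0 := (map_ne_zero_iff _ (hG.vecMulLinear_injective e)).2 hx0
  have hκ : Fintype.card κ ≤ N := by simpa using Fintype.card_le_of_embedding e
  rw [minDist_eq_of_forall_le (LinearMap.mem_range_self G.vecMulLinear x) hxG]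
  · rw [vecMulLinear_apply]
    omega
  · rintro _ ⟨y, rfl⟩ hy
    have hy0 : y ≠ 0 := by
      rintro rfl
      exact hy (map_zero _)
    have := hG.lt_hWeight_vecMul_add_card hy0
    simp only [vecMulLinear_apply]
    omega

end IsMDSGenerator

section Massey

variable {F κ : Type*} [Field F] [Fintype κ] {N : ℕ}

theorem mulVec_eq_zero_of_mem_dualCode {G : Matrix κ (Fin N) F} {v : Fin N → F}
    (hv : v ∈ dualCode (LinearMap.range G.vecMulLinear)) : G *ᵥ v = 0 := by
  classical
  ext j
  exact hv (G j) ⟨Pi.single j 1, single_one_vecMul j G⟩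

theorem range_vecMulLinear_inf_dualCode_eq_bot [DecidableEq κ] {G : Matrix κ (Fin N) F}
    (hG : (G * Gᵀ).det ≠ 0) :
    LinearMap.range G.vecMulLinear ⊓ dualCode (LinearMap.range G.vecMulLinear) = ⊥ := by
  rw [eq_bot_iff]
  rintro _ ⟨⟨x, rfl⟩, hdual⟩
  have hGram : (G * Gᵀ) *ᵥ x = 0 := by
    rw [← mulVec_mulVec, mulVec_transpose]
    exact mulVec_eq_zero_of_mem_dualCode hdual
  rw [eq_zero_of_mulVec_eq_zero hG hGram]
  exact map_zero _

end Massey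

section ColumnScaling

variable {F κ ι : Type*} [Field F] [Fintype κ] [Fintype ι] [DecidableEq ι]

/-- Column multipliers equal to `1` on the columns selected by `e` and to `t` on all others. They
make the Gram matrix of the scaled generator affine in `t ^ 2`, with the Gram matrix of the
selected columns as constant term. -/
def offMinorScaling (e : κ ↪ ι) (t : F) : ι → F :=
  (Finset.univ.map e).piecewise 1 (Function.const ι t)

theorem gram_mul_diagonal_offMinorScaling (G : Matrix κ ι F) (e : κ ↪ ι) (t : F) :
    G * diagonal (offMinorScaling e t) * (G * diagonal (offMinorScaling e t))ᵀ =
      t ^ 2 • (G * Gᵀ - G.submatrix id e * (G.submatrix id e)ᵀ) +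
        G.submatrix id e * (G.submatrix id e)ᵀ := by
  ext j k
  have hminor : (G.submatrix id e * (G.submatrix id e)ᵀ) j k =
      ∑ m, if m ∈ Finset.univ.map e then G j m * G k m else 0 := by
    rw [Finset.sum_ite_mem, Finset.univ_inter, Finset.sum_map]
    rfl
  rw [Matrix.add_apply, Matrix.smul_apply, Matrix.sub_apply, hminor, mul_apply, mul_apply,
    ← Finset.sum_sub_distrib, Finset.smul_sum, ← Finset.sum_add_distrib]
  refine Finset.sum_congr rfl fun m _ => ?_
  simp only [Matrix.mul_diagonal, transpose_apply, offMinorScaling, Finset.piecewise,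
    Pi.one_apply, Function.const_apply, smul_eq_mul]
  split_ifs <;> ring

variable [DecidableEq κ]

theorem exists_ne_zero_det_sq_smul_add_ne_zero (A : Matrix κ κ F) {B : Matrix κ κ F}
    (hB : B.det ≠ 0) (hF : ((2 * Fintype.card κ + 1 : ℕ) : Cardinal) < #F) :
    ∃ t : F, t ≠ 0 ∧ (t ^ 2 • A + B).det ≠ 0 := by
  set f : F[X] := det ((X : F[X]) • A.map C + B.map C) with hf
  have hf0 : f ≠ 0 := by
    intro h
    apply hB
    rw [← coeff_det_X_add_C_zero A B, ← hf, h, coeff_zero]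
  have hdeg : (X * expand F 2 f).natDegree ≤ 2 * Fintype.card κ + 1 := by
    have hfdeg : f.natDegree ≤ Fintype.card κ := natDegree_det_X_add_C_le A B
    have hmul := natDegree_mul_le (p := (X : F[X])) (q := expand F 2 f)
    rw [natDegree_X, natDegree_expand] at hmul
    omega
  obtain ⟨t, ht⟩ := exists_eval_ne_zero_of_natDegree_lt_card (X * expand F 2 f)
    (mul_ne_zero X_ne_zero ((expand_ne_zero two_pos).2 hf0))
    ((Nat.cast_le.2 hdeg).trans_lt hF)
  rw [eval_mul, eval_X, expand_eval] at ht
  refine ⟨t, left_ne_zero_of_mul ht, ?_⟩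
  have heval : f.eval (t ^ 2) = (t ^ 2 • A + B).det := by
    rw [hf, ← coe_evalRingHom, RingHom.map_det]
    congr 1
    ext j k
    simp [mul_comm (A j k)]
  exact heval ▸ right_ne_zero_of_mul ht

theorem exists_det_gram_mul_diagonal_ne_zero (G : Matrix κ ι F) (e : κ ↪ ι)
    (he : (G.submatrix id e).det ≠ 0)
    (hF : ((2 * Fintype.card κ + 1 : ℕ) : Cardinal) < #F) :
    ∃ v : ι → F, (∀ m, v m ≠ 0) ∧ (G * diagonal v * (G * diagonal v)ᵀ).det ≠ 0 := by
  have hminor : (G.submatrix id e * (G.submatrix id e)ᵀ).det ≠ 0 := by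
    rw [det_mul, det_transpose]
    exact mul_ne_zero he he
  obtain ⟨t, ht0, ht⟩ := exists_ne_zero_det_sq_smul_add_ne_zero
    (G * Gᵀ - G.submatrix id e * (G.submatrix id e)ᵀ) hminor hF
  refine ⟨offMinorScaling e t, fun m => ?_, ?_⟩
  · exact Finset.piecewise_cases _ _ _ (· ≠ 0) one_ne_zero ht0
  · rwa [gram_mul_diagonal_offMinorScaling]

end ColumnScaling

theorem exists_LCD_MDS_code {F : Type*} [Field F] {N K : ℕ} (hK : 0 < K) (hKN : K ≤ N)
    (hNF : (N : Cardinal) ≤ #F) (hKF : ((2 * K + 1 : ℕ) : Cardinal) < #F) :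
    ∃ C : Submodule F (Fin N → F),
      Module.finrank F C = K ∧ minDist C = N - K + 1 ∧ C ⊓ dualCode C = ⊥ := by
  have : Nonempty (Fin K) := ⟨⟨0, hK⟩⟩
  let e : Fin K ↪ Fin N := Fin.castLEEmb hKN
  obtain ⟨a⟩ : Nonempty (Fin N ↪ F) := Cardinal.lift_mk_le'.1 (by simpa using hNF)
  have hV := IsMDSGenerator.rectVandermonde_transpose a.injective K
  obtain ⟨v, hv, hgram⟩ := exists_det_gram_mul_diagonal_ne_zero _ e (hV e)
    (by rwa [Fintype.card_fin])
  have hG := hV.mul_diagonal hv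
  refine ⟨_, ?_, ?_, range_vecMulLinear_inf_dualCode_eq_bot hgram⟩
  · rw [hG.finrank_range_vecMulLinear e, Fintype.card_fin]
  · rw [hG.minDist_range_vecMulLinear e, Fintype.card_fin]

theorem exists_lt_card_galoisField (p : ℕ) [Fact p.Prime] (M : ℕ) :
    ∃ β : ℕ, 1 ≤ β ∧ (M : Cardinal) < #(GaloisField p β) := by
  refine ⟨M + 1, M.succ_pos, ?_⟩
  rw [← Nat.cast_card, GaloisField.card p _ M.succ_ne_zero, Nat.cast_lt]
  exact M.lt_succ_self.trans (Nat.lt_pow_self (Fact.out : p.Prime).one_lt)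

theorem minDist_ratio_eq {i n : ℕ} (hi : i ≠ 0) (hn : n ≠ 0) (r : ℕ) :
    ((i * (n - r) + 1 : ℚ) / (i * n : ℚ)) = 1 - (r : ℚ) / (n : ℚ) + 1 / (i * n : ℚ) := by
  have hi' : (i : ℚ) ≠ 0 := Nat.cast_ne_zero.2 hi
  have hn' : (n : ℚ) ≠ 0 := Nat.cast_ne_zero.2 hn
  field_simp

theorem tendsto_minDist_ratio {n : ℕ} (hn : n ≠ 0) (r : ℕ) :
    Filter.Tendsto (fun i : ℕ => ((i * (n - r) + 1 : ℚ) / (i * n : ℚ)))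
      Filter.atTop (nhds (1 - (r : ℚ) / (n : ℚ))) := by
  have hlim : Filter.Tendsto (fun i : ℕ => 1 - (r : ℚ) / (n : ℚ) + 1 / (i * n : ℚ))
      Filter.atTop (nhds (1 - (r : ℚ) / (n : ℚ))) := by
    simpa [mul_comm, div_eq_mul_inv] using
      (tendsto_const_div_atTop_nhds_zero_nat (1 / (n : ℚ))).const_add (1 - (r : ℚ) / (n : ℚ))
  refine hlim.congr' ?_
  filter_upwards [Filter.eventually_ne_atTop 0] with i hi
  exact (minDist_ratio_eq hi hn r).symm

theorem exists_asymptotic_LCD_MDS_family_general (p : ℕ) [Fact p.Prime] (n r : ℕ) (hr0 : 0 < r)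
    (hrn : r ≤ n) :
    (∀ i : ℕ, i ≠ 0 →
      (∃ β : ℕ, 1 ≤ β ∧
        ∃ C : Submodule (GaloisField p β) (Fin (i * n) → GaloisField p β),
          Module.finrank (GaloisField p β) C = i * r ∧
          minDist C = i * (n - r) + 1 ∧ C ⊓ dualCode C = ⊥) ∧
      ((i * r : ℚ) / (i * n : ℚ) = (r : ℚ) / (n : ℚ)) ∧
      ((i * (n - r) + 1 : ℚ) / (i * n : ℚ) =
        1 - (r : ℚ) / (n : ℚ) + 1 / (i * n : ℚ))) ∧
    Filter.Tendsto (fun i : ℕ => ((i * (n - r) + 1 : ℚ) / (i * n : ℚ)))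
      Filter.atTop (nhds (1 - (r : ℚ) / (n : ℚ))) := by
  have hn : n ≠ 0 := (hr0.trans_le hrn).ne'
  refine ⟨fun i hi => ⟨?_, mul_div_mul_left _ _ (Nat.cast_ne_zero.2 hi), minDist_ratio_eq hi hn r⟩,
    tendsto_minDist_ratio hn r⟩
  have hKN : i * r ≤ i * n := Nat.mul_le_mul_left i hrn
  obtain ⟨β, hβ, hcard⟩ := exists_lt_card_galoisField p (2 * (i * n) + 1)
  refine ⟨β, hβ, ?_⟩
  rw [Nat.mul_sub]
  exact exists_LCD_MDS_code (Nat.mul_pos (Nat.pos_of_ne_zero hi) hr0) hKN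
    ((Nat.cast_le.2 (by omega)).trans hcard.le) ((Nat.cast_le.2 (by omega)).trans_lt hcard)

/-- For `0 < r < n` with `n` odd: for every odd `i ≥ 1` there is an LCD
MDS code of length `i·n`, dimension `i·r` and minimum distance `i·(n−r) + 1` over some
field `GF(2^β)` of characteristic `2`; each such code has rate exactly `r/n` and ratio of
minimum distance to length `1 − r/n + 1/(i·n)`, which tends to `1 − r/n` as `i → ∞`. -/
theorem exists_asymptotic_LCD_MDS_family (n r : ℕ) (hr0 : 0 < r) (hrn : r < n)
    (hn : Odd n) :
    (∀ i : ℕ, Odd i →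
      (∃ β : ℕ, 1 ≤ β ∧
        ∃ C : Submodule (GaloisField 2 β) (Fin (i * n) → GaloisField 2 β),
          Module.finrank (GaloisField 2 β) C = i * r ∧
          minDist C = i * (n - r) + 1 ∧ C ⊓ dualCode C = ⊥) ∧
      ((i * r : ℚ) / (i * n : ℚ) = (r : ℚ) / (n : ℚ)) ∧
      ((i * (n - r) + 1 : ℚ) / (i * n : ℚ) =
        1 - (r : ℚ) / (n : ℚ) + 1 / (i * n : ℚ))) ∧
    Filter.Tendsto (fun i : ℕ => ((i * (n - r) + 1 : ℚ) / (i * n : ℚ)))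
      Filter.atTop (nhds (1 - (r : ℚ) / (n : ℚ))) :=
  have hfamily := exists_asymptotic_LCD_MDS_family_general 2 n r hr0 hrn.le
  ⟨fun i hi => hfamily.1 i hi.pos.ne', hfamily.2⟩
end
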